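/- Run FISTA with step η = 1 and momentum β = (1−√α)/(1+√α), initialized at x_{−1} = x₀ = 0, on the over-regularized objective F_{2ρ} = f + g_B, and suppose there is a vertex set 𝓑 such that the spurious active sets Ã_k := supp(x_{k+1}) ∩ S_Aᶜ satisfy Ã_k ⊆ 𝓑 for all k ≥ 0. Then there is an absolute constant C > 0 such that the total spurious degree-weighted work satisfies Σ_{k=0}^{∞} vol(Ã_k) ≤ C·√(vol(𝓑))/(ρ·α^{3/2}). -/

import Mathlib

open Finset

noncomputable section

/-- Degree of vertex `i` in the (unweighted) graph with adjacency matrix `A`. -/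
def deg {n : ℕ} (A : Matrix (Fin n) (Fin n) ℝ) (i : Fin n) : ℝ := ∑ j, A i j

/-- The PageRank matrix `Q = αI + ((1−α)/2)·𝓛 = ((1+α)/2)·I − ((1−α)/2)·D^{-1/2} A D^{-1/2}`. -/
def Qmat {n : ℕ} (A : Matrix (Fin n) (Fin n) ℝ) (α : ℝ) : Matrix (Fin n) (Fin n) ℝ :=
  fun i j => (if i = j then (1 + α) / 2 else 0)
    - ((1 - α) / 2) * A i j / (Real.sqrt (deg A i) * Real.sqrt (deg A j))

/-- Smooth PageRank objective `f(x) = (1/2)⟨x, Qx⟩ − α⟨D^{-1/2} e_v, x⟩` with seed vertex `v`. -/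
def fPR {n : ℕ} (A : Matrix (Fin n) (Fin n) ℝ) (α : ℝ) (v : Fin n) (x : Fin n → ℝ) : ℝ :=
  (1 / 2) * (∑ i, x i * (Qmat A α).mulVec x i) - α * (x v / Real.sqrt (deg A v))

/-- Gradient of `fPR`: `∇f(x) = Qx − α·D^{-1/2} e_v`. -/
def gradf {n : ℕ} (A : Matrix (Fin n) (Fin n) ℝ) (α : ℝ) (v : Fin n) (x : Fin n → ℝ) :
    Fin n → ℝ :=
  fun i => (Qmat A α).mulVec x i - α * (if i = v then 1 / Real.sqrt (deg A v) else 0)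

/-- Weighted ℓ1 norm `‖D^{1/2} x‖₁ = ∑ i, √(d i)·|x i|`. -/
def l1w {n : ℕ} (A : Matrix (Fin n) (Fin n) ℝ) (x : Fin n → ℝ) : ℝ :=
  ∑ i, Real.sqrt (deg A i) * |x i|

/-- ℓ1-regularized PageRank objective `F_ρ(x) = f(x) + αρ‖D^{1/2}x‖₁`. -/
def Freg {n : ℕ} (A : Matrix (Fin n) (Fin n) ℝ) (α : ℝ) (v : Fin n) (ρ : ℝ)
    (x : Fin n → ℝ) : ℝ :=
  fPR A α v x + α * ρ * l1w A x

/-- Coordinatewise soft-thresholding at levels `t·√(d i)`: this is the proximal map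
`prox_{ηg}` of `g(x) = cαρ‖D^{1/2}x‖₁` with `t = η·c·α·ρ`. -/
def softT {n : ℕ} (A : Matrix (Fin n) (Fin n) ℝ) (t : ℝ) (w : Fin n → ℝ) : Fin n → ℝ :=
  fun i => Real.sign (w i) * max (|w i| - t * Real.sqrt (deg A i)) 0

/-- Euclidean norm on `Fin n → ℝ`. -/
def enorm {n : ℕ} (x : Fin n → ℝ) : ℝ := Real.sqrt (∑ i, (x i) ^ 2)

open Classical in
/-- Degree-weighted volume of a vertex set: `vol(S) = ∑_{i ∈ S} d i`. -/
def volS {n : ℕ} (A : Matrix (Fin n) (Fin n) ℝ) (S : Set (Fin n)) : ℝ :=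
  ∑ i ∈ Finset.univ.filter (fun i => i ∈ S), deg A i

/-- Neighbor set of a vertex. -/
def nbr {n : ℕ} (A : Matrix (Fin n) (Fin n) ℝ) (i : Fin n) : Set (Fin n) := {j | A i j ≠ 0}

/-- Vertex boundary of `S`: vertices outside `S` with a neighbor in `S`. -/
def bdry {n : ℕ} (A : Matrix (Fin n) (Fin n) ℝ) (S : Set (Fin n)) : Set (Fin n) :=
  {j | j ∉ S ∧ ∃ i ∈ S, A j i ≠ 0}

/-- `A` is the adjacency matrix of a finite undirected unweighted loopless graph
with all degrees positive. -/
structure IsGraph {n : ℕ} (A : Matrix (Fin n) (Fin n) ℝ) : Prop where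
  symm : ∀ i j, A i j = A j i
  zero_one : ∀ i j, A i j = 0 ∨ A i j = 1
  loopless : ∀ i, A i i = 0
  deg_pos : ∀ i, 0 < deg A i

/-- The normalized adjacency operator `D^{-1/2} A D^{-1/2}` applied to a vector. -/
def normAdj {n : ℕ} (A : Matrix (Fin n) (Fin n) ℝ) (e : Fin n → ℝ) : Fin n → ℝ :=
  fun i => ∑ j, A i j / (Real.sqrt (deg A i) * Real.sqrt (deg A j)) * e j

namespace IsGraph

variable {n : ℕ} {A : Matrix (Fin n) (Fin n) ℝ}

lemma nonneg (hA : IsGraph A) (i j : Fin n) : 0 ≤ A i j := by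
  rcases hA.zero_one i j with h | h <;> simp [h]

lemma one_le_deg (hA : IsGraph A) (i : Fin n) : 1 ≤ deg A i := by
  obtain ⟨j, -, hj⟩ := Finset.exists_lt_of_sum_lt
    (show ∑ _j : Fin n, (0 : ℝ) < ∑ j, A i j by
      simpa [deg] using hA.deg_pos i)
  have h1 : A i j = 1 := (hA.zero_one i j).resolve_left hj.ne'
  rw [← h1]
  exact Finset.single_le_sum (f := fun j => A i j) (fun j _ => hA.nonneg i j) (Finset.mem_univ j)

lemma sqrt_deg_pos (hA : IsGraph A) (i : Fin n) : 0 < Real.sqrt (deg A i) :=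
  Real.sqrt_pos.2 (hA.deg_pos i)

/-- The normalized adjacency operator is a contraction in the Euclidean norm. -/
lemma sum_normAdj_sq_le (hA : IsGraph A) (e : Fin n → ℝ) :
    ∑ i, (normAdj A e i) ^ 2 ≤ ∑ i, (e i) ^ 2 := by
  have key : ∀ i, (normAdj A e i) ^ 2 ≤ ∑ j, A i j * ((e j) ^ 2 / deg A j) := by
    intro i
    have hi := hA.sqrt_deg_pos i
    have h1 : normAdj A e i
        = (∑ j, A i j * (e j / Real.sqrt (deg A j))) / Real.sqrt (deg A i) := by
      rw [normAdj, Finset.sum_div]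
      refine Finset.sum_congr rfl fun j _ => ?_
      have := hA.sqrt_deg_pos j
      field_simp
    have h2 : (∑ j, A i j * (e j / Real.sqrt (deg A j))) ^ 2
        ≤ (∑ j, A i j) * ∑ j, A i j * ((e j) ^ 2 / deg A j) := by
      refine Finset.sum_sq_le_sum_mul_sum_of_sq_le_mul _ (fun j _ => hA.nonneg i j)
        (fun j _ => mul_nonneg (hA.nonneg i j)
          (div_nonneg (sq_nonneg _) (hA.deg_pos j).le)) (fun j _ => le_of_eq ?_)
      rw [mul_pow, div_pow, Real.sq_sqrt (hA.deg_pos j).le]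
      ring
    rw [h1, div_pow, Real.sq_sqrt (hA.deg_pos i).le, div_le_iff₀ (hA.deg_pos i), mul_comm _ (deg A i)]
    exact h2
  calc ∑ i, (normAdj A e i) ^ 2 ≤ ∑ i, ∑ j, A i j * ((e j) ^ 2 / deg A j) :=
        Finset.sum_le_sum fun i _ => key i
    _ = ∑ j, ∑ i, A i j * ((e j) ^ 2 / deg A j) := Finset.sum_comm
    _ = ∑ j, (e j) ^ 2 := by
        refine Finset.sum_congr rfl fun j _ => ?_
        have hj : ∑ i, A i j = deg A j := Finset.sum_congr rfl fun i _ => hA.symm i j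
        rw [← Finset.sum_mul, hj, mul_div_cancel₀ _ (hA.deg_pos j).ne']

lemma Qmat_mulVec (A : Matrix (Fin n) (Fin n) ℝ) (α : ℝ) (e : Fin n → ℝ) (i : Fin n) :
    (Qmat A α).mulVec e i = (1 + α) / 2 * e i - (1 - α) / 2 * normAdj A e i := by
  simp only [Matrix.mulVec, dotProduct, Qmat, normAdj, sub_mul, ite_mul, zero_mul,
    Finset.sum_sub_distrib, Finset.sum_ite_eq, Finset.mem_univ, if_true, Finset.mul_sum]
  congr 1
  exact Finset.sum_congr rfl fun j _ => by ring

lemma abs_sum_mul_normAdj_le (hA : IsGraph A) (e : Fin n → ℝ) :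
    |∑ i, e i * normAdj A e i| ≤ ∑ i, (e i) ^ 2 := by
  have h := hA.sum_normAdj_sq_le e
  calc |∑ i, e i * normAdj A e i| ≤ ∑ i, |e i * normAdj A e i| := Finset.abs_sum_le_sum_abs _ _
    _ ≤ ∑ i, ((e i) ^ 2 + (normAdj A e i) ^ 2) / 2 := by
        refine Finset.sum_le_sum fun i _ => abs_le.2 ⟨?_, ?_⟩
        · nlinarith [sq_nonneg (e i + normAdj A e i)]
        · nlinarith [sq_nonneg (e i - normAdj A e i)]
    _ ≤ ∑ i, (e i) ^ 2 := by
        rw [← Finset.sum_div, Finset.sum_add_distrib]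
        linarith

lemma quad_eq (A : Matrix (Fin n) (Fin n) ℝ) (α : ℝ) (e : Fin n → ℝ) :
    ∑ i, e i * (Qmat A α).mulVec e i
      = (1 + α) / 2 * ∑ i, (e i) ^ 2 - (1 - α) / 2 * ∑ i, e i * normAdj A e i := by
  rw [Finset.mul_sum, Finset.mul_sum, ← Finset.sum_sub_distrib]
  exact Finset.sum_congr rfl fun i _ => by rw [Qmat_mulVec]; ring

lemma le_quad (hA : IsGraph A) {α : ℝ} (h1 : α ≤ 1) (e : Fin n → ℝ) :
    α * ∑ i, (e i) ^ 2 ≤ ∑ i, e i * (Qmat A α).mulVec e i := by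
  rw [quad_eq]
  nlinarith [(abs_le.1 (hA.abs_sum_mul_normAdj_le e)).2]

lemma quad_le (hA : IsGraph A) {α : ℝ} (h1 : α ≤ 1) (e : Fin n → ℝ) :
    ∑ i, e i * (Qmat A α).mulVec e i ≤ ∑ i, (e i) ^ 2 := by
  rw [quad_eq]
  nlinarith [(abs_le.1 (hA.abs_sum_mul_normAdj_le e)).1]

/-- `I - Q` is a contraction in the Euclidean norm. -/
lemma sum_sub_Qmat_mulVec_sq_le (hA : IsGraph A) {α : ℝ} (h0 : 0 < α) (h1 : α ≤ 1)
    (e : Fin n → ℝ) :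
    ∑ i, (e i - (Qmat A α).mulVec e i) ^ 2 ≤ ∑ i, (e i) ^ 2 := by
  have h := hA.sum_normAdj_sq_le e
  calc ∑ i, (e i - (Qmat A α).mulVec e i) ^ 2
      ≤ ∑ i, ((e i) ^ 2 + (normAdj A e i) ^ 2) / 2 := by
        refine Finset.sum_le_sum fun i _ => ?_
        rw [Qmat_mulVec]
        have h2 : e i - ((1 + α) / 2 * e i - (1 - α) / 2 * normAdj A e i)
            = (1 - α) * ((e i + normAdj A e i) / 2) := by ring
        have h3 : (1 - α) ^ 2 ≤ 1 := by nlinarith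
        rw [h2, mul_pow]
        nlinarith [sq_nonneg (e i - normAdj A e i), sq_nonneg ((e i + normAdj A e i) / 2)]
    _ ≤ ∑ i, (e i) ^ 2 := by
        rw [← Finset.sum_div, Finset.sum_add_distrib]
        linarith

lemma Qmat_symm (hA : IsGraph A) (α : ℝ) (i j : Fin n) : Qmat A α i j = Qmat A α j i := by
  simp only [Qmat, hA.symm i j, eq_comm (a := i), mul_comm (Real.sqrt (deg A i))]

lemma Qmat_offdiag_nonpos (hA : IsGraph A) {α : ℝ} (h1 : α ≤ 1) {i j : Fin n} (hij : i ≠ j) :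
    Qmat A α i j ≤ 0 := by
  have h : 0 ≤ (1 - α) / 2 * A i j / (Real.sqrt (deg A i) * Real.sqrt (deg A j)) :=
    div_nonneg (mul_nonneg (by linarith) (hA.nonneg i j)) (by positivity)
  simp only [Qmat, hij, if_false]
  linarith

/-- Second-order expansion of the quadratic objective. -/
lemma fPR_expand (hA : IsGraph A) (α : ℝ) (v : Fin n) (y z : Fin n → ℝ) :
    fPR A α v z = fPR A α v y + ∑ i, gradf A α v y i * (z i - y i)
      + 1 / 2 * ∑ i, (z - y) i * (Qmat A α).mulVec (z - y) i := by
  have hsymm : ∑ i, y i * (Qmat A α).mulVec z i = ∑ i, z i * (Qmat A α).mulVec y i := by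
    simp only [Matrix.mulVec, dotProduct, Finset.mul_sum]
    rw [Finset.sum_comm]
    refine Finset.sum_congr rfl fun i _ => Finset.sum_congr rfl fun j _ => ?_
    rw [hA.Qmat_symm α i j]; ring
  have hgrad : ∑ i, gradf A α v y i * (z i - y i)
      = ∑ i, z i * (Qmat A α).mulVec y i - ∑ i, y i * (Qmat A α).mulVec y i
        - α * ((z v - y v) / Real.sqrt (deg A v)) := by
    have hv : α * ((z v - y v) / Real.sqrt (deg A v))
        = ∑ i, α * (if i = v then 1 / Real.sqrt (deg A v) else 0) * (z i - y i) := by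
      simp [mul_assoc]
      left; ring
    rw [hv, ← Finset.sum_sub_distrib, ← Finset.sum_sub_distrib]
    exact Finset.sum_congr rfl fun i _ => by simp only [gradf]; ring
  have hquad : ∑ i, (z - y) i * (Qmat A α).mulVec (z - y) i
      = ∑ i, z i * (Qmat A α).mulVec z i - ∑ i, z i * (Qmat A α).mulVec y i
        - ∑ i, y i * (Qmat A α).mulVec z i + ∑ i, y i * (Qmat A α).mulVec y i := by
    rw [← Finset.sum_sub_distrib, ← Finset.sum_sub_distrib, ← Finset.sum_add_distrib]
    refine Finset.sum_congr rfl fun i _ => ?_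
    rw [Matrix.mulVec_sub]
    simp only [Pi.sub_apply]
    ring
  rw [hgrad, hquad, hsymm]
  simp only [fPR]
  ring

end IsGraph

/-- Variational inequality satisfied by scalar soft-thresholding. -/
lemma softThreshold_variational {τ : ℝ} (hτ : 0 ≤ τ) (w z : ℝ) :
    τ * |Real.sign w * max (|w| - τ) 0|
      + (w - Real.sign w * max (|w| - τ) 0) * (z - Real.sign w * max (|w| - τ) 0) ≤ τ * |z| := by
  have h1 := le_abs_self z
  have h2 := neg_abs_le z
  rcases le_total (|w| - τ) 0 with h | h
  · rw [max_eq_right h]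
    simp only [mul_zero, abs_zero, sub_zero, zero_add]
    calc w * z ≤ |w * z| := le_abs_self _
      _ = |w| * |z| := abs_mul _ _
      _ ≤ τ * |z| := by gcongr; linarith
  · rw [max_eq_left h]
    rcases lt_trichotomy w 0 with hw | hw | hw
    · rw [Real.sign_of_neg hw]
      rw [abs_of_neg hw] at h ⊢
      rw [abs_of_nonpos (by linarith)]
      nlinarith
    · subst hw
      simp only [Real.sign_zero, zero_mul, abs_zero, mul_zero, sub_zero, add_zero]
      positivity
    · rw [Real.sign_of_pos hw]
      rw [abs_of_pos hw] at h ⊢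
      rw [abs_of_nonneg (by linarith)]
      nlinarith

/-- First-order conditions at a fixed point of scalar proximal gradient. -/
lemma softThreshold_fixed {τ p g : ℝ} (hτ : 0 ≤ τ)
    (h : Real.sign (p - g) * max (|p - g| - τ) 0 = p) :
    |g| ≤ τ ∧ (0 < p → g = -τ) ∧ (p < 0 → g = τ) := by
  have hv := fun z => softThreshold_variational hτ (p - g) z
  rw [h] at hv
  have a1 := hv (2 * p)
  have a2 := hv 0
  have a3 := hv (p + 1)
  have a4 := hv (p - 1)
  have b1 := abs_add_le p 1
  have b2 := abs_sub p 1
  rw [abs_one] at b1 b2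
  rw [abs_mul, abs_two] at a1
  rw [abs_zero] at a2
  have e : τ * |p| = -g * p := by linarith
  refine ⟨abs_le.2 ⟨by nlinarith, by nlinarith⟩, fun hp => ?_, fun hp => ?_⟩
  · rw [abs_of_pos hp] at e
    have := mul_right_cancel₀ hp.ne' e
    linarith
  · rw [abs_of_neg hp] at e
    exact (mul_right_cancel₀ hp.ne (by linarith)).symm

lemma softThreshold_eq_zero {τ w : ℝ}
    (h : |w| ≤ τ) : Real.sign w * max (|w| - τ) 0 = 0 := by
  rw [max_eq_right (by linarith), mul_zero]

namespace IsGraph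

variable {n : ℕ} {A : Matrix (Fin n) (Fin n) ℝ}

/-- The fundamental inequality of one proximal gradient step with unit step size. -/
lemma prox_step_le (hA : IsGraph A) {α ρ : ℝ} (h0 : 0 < α) (h1 : α ≤ 1) (hρ : 0 < ρ)
    (v : Fin n) {y p : Fin n → ℝ} (z : Fin n → ℝ)
    (hp : p = softT A (α * ρ) (fun i => y i - gradf A α v y i)) :
    Freg A α v ρ p + ∑ i, (y i - p i) * (z i - y i) + 1 / 2 * ∑ i, (y i - p i) ^ 2
      + α / 2 * ∑ i, (z i - y i) ^ 2 ≤ Freg A α v ρ z := by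
  have ez := hA.fPR_expand α v y z
  have ep := hA.fPR_expand α v y p
  have lz := hA.le_quad h1 (z - y)
  have lp := hA.quad_le h1 (p - y)
  have hl : α * ρ * l1w A p + ∑ i, (y i - gradf A α v y i - p i) * (z i - p i)
      ≤ α * ρ * l1w A z := by
    simp only [l1w, Finset.mul_sum]
    rw [← Finset.sum_add_distrib]
    refine Finset.sum_le_sum fun i _ => ?_
    have hs := softThreshold_variational (τ := α * ρ * Real.sqrt (deg A i)) (by positivity)
      (y i - gradf A α v y i) (z i)
    have hpi : Real.sign (y i - gradf A α v y i)
        * max (|y i - gradf A α v y i| - α * ρ * Real.sqrt (deg A i)) 0 = p i := by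
      rw [hp]; rfl
    rw [hpi] at hs
    linarith
  have hsum : ∑ i, (y i - gradf A α v y i - p i) * (z i - p i)
      = ∑ i, (y i - p i) * (z i - y i) + ∑ i, (y i - p i) ^ 2
        - ∑ i, gradf A α v y i * (z i - y i) + ∑ i, gradf A α v y i * (p i - y i) := by
    rw [← Finset.sum_add_distrib, ← Finset.sum_sub_distrib, ← Finset.sum_add_distrib]
    exact Finset.sum_congr rfl fun i _ => by ring
  have hpy : ∑ i, (p - y) i ^ 2 = ∑ i, (y i - p i) ^ 2 :=
    Finset.sum_congr rfl fun i _ => by simp only [Pi.sub_apply]; ring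
  simp only [Pi.sub_apply] at lz hpy lp ez ep
  simp only [Freg]
  linarith

/-- A minimizer is a fixed point of the proximal gradient map. -/
lemma minimizer_fixed (hA : IsGraph A) {α ρ : ℝ} (h0 : 0 < α) (h1 : α ≤ 1) (hρ : 0 < ρ)
    (v : Fin n) {s : Fin n → ℝ} (hs : ∀ z, Freg A α v ρ s ≤ Freg A α v ρ z) :
    s = softT A (α * ρ) (fun i => s i - gradf A α v s i) := by
  set p := softT A (α * ρ) (fun i => s i - gradf A α v s i) with hp
  have h := hA.prox_step_le h0 h1 hρ v s hp
  have h2 := hs p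
  simp only [sub_self, mul_zero, Finset.sum_const_zero, ne_eq, OfNat.ofNat_ne_zero,
    not_false_eq_true, zero_pow, add_zero] at h
  have h3 : ∑ i, (s i - p i) ^ 2 = 0 :=
    le_antisymm (by linarith) (Finset.sum_nonneg fun i _ => sq_nonneg _)
  rw [Finset.sum_eq_zero_iff_of_nonneg fun i _ => sq_nonneg _] at h3
  funext i
  have := h3 i (Finset.mem_univ i)
  exact sub_eq_zero.1 (pow_eq_zero_iff two_ne_zero |>.1 this)

lemma strong_convexity_at_minimizer (hA : IsGraph A) {α ρ : ℝ} (h0 : 0 < α) (h1 : α ≤ 1)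
    (hρ : 0 < ρ) (v : Fin n) {s : Fin n → ℝ}
    (hs : ∀ z, Freg A α v ρ s ≤ Freg A α v ρ z) (z : Fin n → ℝ) :
    Freg A α v ρ s + α / 2 * ∑ i, (z i - s i) ^ 2 ≤ Freg A α v ρ z := by
  have h := hA.prox_step_le h0 h1 hρ v z (hA.minimizer_fixed h0 h1 hρ v hs)
  simpa using h

lemma kkt (hA : IsGraph A) {α ρ : ℝ} (h0 : 0 < α) (h1 : α ≤ 1) (hρ : 0 < ρ)
    (v : Fin n) {s : Fin n → ℝ} (hs : ∀ z, Freg A α v ρ s ≤ Freg A α v ρ z) (i : Fin n) :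
    |gradf A α v s i| ≤ α * ρ * Real.sqrt (deg A i)
      ∧ (0 < s i → gradf A α v s i = -(α * ρ * Real.sqrt (deg A i)))
      ∧ (s i < 0 → gradf A α v s i = α * ρ * Real.sqrt (deg A i)) :=
  softThreshold_fixed (by positivity) (congrFun (hA.minimizer_fixed h0 h1 hρ v hs) i).symm

/-- Comparison principle for the M-matrix `Q`. -/
lemma nonpos_of_Qmat_mulVec_nonpos (hA : IsGraph A) {α : ℝ} (h0 : 0 < α) (h1 : α ≤ 1)
    (u : Fin n → ℝ) (hu : ∀ i, 0 < u i → (Qmat A α).mulVec u i ≤ 0) (i : Fin n) : u i ≤ 0 := by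
  set δ : Fin n → ℝ := fun i => max (u i) 0 with hδ
  have hle : ∑ i, δ i * (Qmat A α).mulVec δ i ≤ ∑ i, δ i * (Qmat A α).mulVec u i := by
    simp only [Matrix.mulVec, dotProduct, Finset.mul_sum]
    refine Finset.sum_le_sum fun i _ => Finset.sum_le_sum fun j _ => ?_
    have hi : 0 ≤ δ i := le_max_right _ _
    by_cases hij : i = j
    · subst hij
      apply le_of_eq
      rcases le_total (u i) 0 with h | h
      · simp [hδ, max_eq_right h]
      · simp [hδ, max_eq_left h]
    · refine mul_le_mul_of_nonneg_left ?_ hi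
      exact mul_le_mul_of_nonpos_left (le_max_left _ _) (hA.Qmat_offdiag_nonpos h1 hij)
  have hnp : ∑ i, δ i * (Qmat A α).mulVec u i ≤ 0 := by
    refine Finset.sum_nonpos fun i _ => ?_
    rcases le_or_gt (u i) 0 with h | h
    · simp [hδ, max_eq_right h]
    · exact mul_nonpos_of_nonneg_of_nonpos (le_max_right _ _) (hu i h)
  have hq := hA.le_quad h1 δ
  have hz : ∑ i, (δ i) ^ 2 = 0 := by
    have := Finset.sum_nonneg (s := Finset.univ) fun i _ => sq_nonneg (δ i)
    nlinarith
  rw [Finset.sum_eq_zero_iff_of_nonneg fun i _ => sq_nonneg _] at hz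
  have h3 : δ i = 0 := pow_eq_zero_iff two_ne_zero |>.1 (hz i (Finset.mem_univ i))
  exact (le_max_left _ _).trans h3.le

lemma minimizer_nonneg (hA : IsGraph A) {α ρ : ℝ} (h0 : 0 < α) (h1 : α ≤ 1) (hρ : 0 < ρ)
    (v : Fin n) {s : Fin n → ℝ} (hs : ∀ z, Freg A α v ρ s ≤ Freg A α v ρ z) (i : Fin n) :
    0 ≤ s i := by
  have h := hA.nonpos_of_Qmat_mulVec_nonpos h0 h1 (-s) (fun i hi => ?_) i
  · simpa using h
  · have hk := (hA.kkt h0 h1 hρ v hs i).2.2 (by simpa using hi)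
    have hp : 0 ≤ α * ρ * Real.sqrt (deg A i) := by positivity
    have hq : 0 ≤ α * (if i = v then 1 / Real.sqrt (deg A v) else 0) := by
      split_ifs <;> positivity
    simp only [gradf] at hk
    rw [Matrix.mulVec_neg, Pi.neg_apply]
    linarith

lemma gradf_sub (A : Matrix (Fin n) (Fin n) ℝ) (α : ℝ) (v : Fin n) (a b : Fin n → ℝ)
    (i : Fin n) :
    gradf A α v a i - gradf A α v b i = (Qmat A α).mulVec (a - b) i := by
  rw [Matrix.mulVec_sub]
  simp only [gradf, Pi.sub_apply]
  ring

/-- Minimizers decrease coordinatewise as the regularization grows. -/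
lemma minimizer_antitone (hA : IsGraph A) {α ρ ρ' : ℝ} (h0 : 0 < α) (h1 : α ≤ 1) (hρ : 0 < ρ)
    (hρρ' : ρ ≤ ρ') (v : Fin n) {a b : Fin n → ℝ}
    (ha : ∀ z, Freg A α v ρ a ≤ Freg A α v ρ z)
    (hb : ∀ z, Freg A α v ρ' b ≤ Freg A α v ρ' z) (i : Fin n) : b i ≤ a i := by
  have h := hA.nonpos_of_Qmat_mulVec_nonpos h0 h1 (b - a) (fun i hi => ?_) i
  · simpa using h
  · have ha0 := hA.minimizer_nonneg h0 h1 hρ v ha i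
    have hk := (hA.kkt h0 h1 (hρ.trans_le hρρ') v hb i).2.1
      (by simp only [Pi.sub_apply] at hi; linarith)
    have hk' := (abs_le.1 (hA.kkt h0 h1 hρ v ha i).1).1
    have : α * ρ * Real.sqrt (deg A i) ≤ α * ρ' * Real.sqrt (deg A i) := by gcongr
    rw [← gradf_sub A α v]
    linarith

/-- Off the support of the solution with parameter `ρ`, the gradient at the solution with a larger
parameter stays within the smaller threshold. -/
lemma abs_gradf_le_of_eq_zero (hA : IsGraph A) {α ρ ρ' : ℝ} (h0 : 0 < α) (h1 : α ≤ 1)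
    (hρ : 0 < ρ) (hρρ' : ρ ≤ ρ') (v : Fin n) {a b : Fin n → ℝ}
    (ha : ∀ z, Freg A α v ρ a ≤ Freg A α v ρ z)
    (hb : ∀ z, Freg A α v ρ' b ≤ Freg A α v ρ' z) {i : Fin n} (hi : a i = 0) :
    b i = 0 ∧ |gradf A α v b i| ≤ α * ρ * Real.sqrt (deg A i) := by
  have hb0 := fun j => hA.minimizer_nonneg h0 h1 (hρ.trans_le hρρ') v hb j
  have hba := fun j => hA.minimizer_antitone h0 h1 hρ hρρ' v ha hb j
  have hbi : b i = 0 := le_antisymm (hi ▸ hba i) (hb0 i)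
  have hp : 0 ≤ α * ρ * Real.sqrt (deg A i) := by positivity
  refine ⟨hbi, abs_le.2 ⟨?_, ?_⟩⟩
  · have hk := (abs_le.1 (hA.kkt h0 h1 hρ v ha i).1).1
    have h2 : 0 ≤ (Qmat A α).mulVec (b - a) i := by
      simp only [Matrix.mulVec, dotProduct]
      refine Finset.sum_nonneg fun j _ => ?_
      by_cases hij : i = j
      · subst hij; simp [hbi, hi]
      · exact mul_nonneg_of_nonpos_of_nonpos (hA.Qmat_offdiag_nonpos h1 hij)
          (sub_nonpos.2 (hba j))
    rw [← gradf_sub A α v] at h2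
    linarith
  · have h2 : (Qmat A α).mulVec b i ≤ 0 := by
      simp only [Matrix.mulVec, dotProduct]
      refine Finset.sum_nonpos fun j _ => ?_
      by_cases hij : i = j
      · subst hij; simp [hbi]
      · exact mul_nonpos_of_nonpos_of_nonneg (hA.Qmat_offdiag_nonpos h1 hij) (hb0 j)
    have hq : 0 ≤ α * (if i = v then 1 / Real.sqrt (deg A v) else 0) := by
      split_ifs <;> positivity
    simp only [gradf]
    linarith

lemma neg_half_le_Freg (hA : IsGraph A) {α ρ : ℝ} (h0 : 0 < α) (h1 : α ≤ 1) (hρ : 0 < ρ)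
    (v : Fin n) (z : Fin n → ℝ) : -(α / 2) ≤ Freg A α v ρ z := by
  have hl : 0 ≤ α * ρ * l1w A z :=
    mul_nonneg (by positivity) (Finset.sum_nonneg fun i _ => by positivity)
  have hq := hA.le_quad h1 z
  have hv : (z v) ^ 2 ≤ ∑ i, (z i) ^ 2 :=
    Finset.single_le_sum (f := fun i => (z i) ^ 2) (fun i _ => sq_nonneg _) (Finset.mem_univ v)
  have hs : 1 ≤ Real.sqrt (deg A v) := Real.one_le_sqrt.2 (hA.one_le_deg v)
  have hz : z v / Real.sqrt (deg A v) ≤ ((z v) ^ 2 + 1) / 2 := by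
    rw [div_le_iff₀ (by linarith)]
    nlinarith [sq_nonneg (z v - 1)]
  simp only [Freg, fPR]
  nlinarith

lemma Freg_zero (A : Matrix (Fin n) (Fin n) ℝ) (α ρ : ℝ) (v : Fin n) :
    Freg A α v ρ 0 = 0 := by
  simp [Freg, fPR, l1w]

lemma sum_minimizer_sq_le (hA : IsGraph A) {α ρ : ℝ} (h0 : 0 < α) (h1 : α ≤ 1) (hρ : 0 < ρ)
    (v : Fin n) {s : Fin n → ℝ} (hs : ∀ z, Freg A α v ρ s ≤ Freg A α v ρ z) :
    ∑ i, (s i) ^ 2 ≤ 1 := by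
  have h := hA.strong_convexity_at_minimizer h0 h1 hρ v hs 0
  have h2 := hA.neg_half_le_Freg h0 h1 hρ v s
  rw [Freg_zero] at h
  simp only [Pi.zero_apply, zero_sub, neg_sq] at h
  nlinarith

/-- One-step contraction of the accelerated Lyapunov function, where `θ = √α`. -/
lemma lyapunov_step (hA : IsGraph A) {α ρ θ : ℝ} (hθ : 0 < θ) (hθ1 : θ ≤ 1) (hα : α = θ ^ 2)
    (hρ : 0 < ρ) (v : Fin n) {a p y z s : Fin n → ℝ}
    (hp : p = softT A (α * ρ) (fun i => y i - gradf A α v y i))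
    (hy : ∀ i, (1 + θ) * y i = a i + θ * z i) :
    Freg A α v ρ p - Freg A α v ρ s + α / 2 * ∑ i, (a i + (p i - a i) / θ - s i) ^ 2
      ≤ (1 - θ) * (Freg A α v ρ a - Freg A α v ρ s + α / 2 * ∑ i, (z i - s i) ^ 2) := by
  have h0 : 0 < α := by rw [hα]; positivity
  have h1 : α ≤ 1 := by rw [hα]; nlinarith
  have ia := mul_le_mul_of_nonneg_left (hA.prox_step_le h0 h1 hρ v a hp) (sub_nonneg.2 hθ1)
  have is := mul_le_mul_of_nonneg_left (hA.prox_step_le h0 h1 hρ v s hp) hθ.le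
  have hdrop : 0 ≤ (1 - θ) * (α / 2 * ∑ i, (a i - y i) ^ 2) :=
    mul_nonneg (sub_nonneg.2 hθ1)
      (mul_nonneg (by positivity) (Finset.sum_nonneg fun i _ => sq_nonneg _))
  have key : α / 2 * ∑ i, (a i + (p i - a i) / θ - s i) ^ 2
      ≤ (1 - θ) * ∑ i, (y i - p i) * (a i - y i) + θ * ∑ i, (y i - p i) * (s i - y i)
        + 1 / 2 * ∑ i, (y i - p i) ^ 2 + θ * (α / 2) * ∑ i, (s i - y i) ^ 2
        + (1 - θ) * (α / 2) * ∑ i, (z i - s i) ^ 2 := by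
    simp only [Finset.mul_sum]
    simp only [← Finset.sum_add_distrib]
    refine Finset.sum_le_sum fun i _ => ?_
    have hw : a i + (p i - a i) / θ - s i
        = ((1 - θ) * (z i - s i) + θ * (y i - s i)) - (y i - p i) / θ := by
      have ha : a i = (1 + θ) * y i - θ * z i := by linarith [hy i]
      rw [ha]
      field_simp
      ring
    have hsq : α / 2 * (a i + (p i - a i) / θ - s i) ^ 2
        = α / 2 * ((1 - θ) * (z i - s i) + θ * (y i - s i)) ^ 2
          - θ * (y i - p i) * ((1 - θ) * (z i - s i) + θ * (y i - s i))
          + 1 / 2 * (y i - p i) ^ 2 := by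
      rw [hw, hα]
      field_simp
      ring
    have hlin : θ * ((1 - θ) * (z i - s i) + θ * (y i - s i))
        = y i - (1 - θ) * a i - θ * s i := by
      linear_combination (-(1 - θ)) * hy i
    have hconv : ((1 - θ) * (z i - s i) + θ * (y i - s i)) ^ 2
        ≤ (1 - θ) * (z i - s i) ^ 2 + θ * (y i - s i) ^ 2 := by
      nlinarith [mul_nonneg (mul_nonneg hθ.le (sub_nonneg.2 hθ1)) (sq_nonneg (z i - y i))]
    have hconv' := mul_le_mul_of_nonneg_left hconv (by positivity : 0 ≤ α / 2)
    have hcross : θ * (y i - p i) * ((1 - θ) * (z i - s i) + θ * (y i - s i))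
        = (y i - p i) * (y i - (1 - θ) * a i - θ * s i) := by
      rw [← hlin]; ring
    rw [hsq, hcross]
    linarith
  linarith

end IsGraph

/-- Linear convergence of the extrapolated FISTA iterates. -/
lemma fista_dist_sq_le {n : ℕ} {A : Matrix (Fin n) (Fin n) ℝ} (hA : IsGraph A)
    {α ρ θ β : ℝ} (hθ : 0 < θ) (hθ1 : θ ≤ 1) (hα : α = θ ^ 2) (hρ : 0 < ρ) (v : Fin n)
    {s : Fin n → ℝ} (hs : ∀ z, Freg A α v ρ s ≤ Freg A α v ρ z)
    (hβ : β = (1 - θ) / (1 + θ)) {x y : ℕ → Fin n → ℝ} (hx0 : x 0 = 0) (hy0 : y 0 = 0)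
    (hx : ∀ k, x (k + 1) = softT A (α * ρ) (fun i => y k i - gradf A α v (y k) i))
    (hy : ∀ k, y (k + 1) = fun i => x (k + 1) i + β * (x (k + 1) i - x k i)) (k : ℕ) :
    ∑ i, (y k i - s i) ^ 2 ≤ 25 * (1 - θ) ^ k := by
  have h0 : 0 < α := by rw [hα]; positivity
  have h1 : α ≤ 1 := by rw [hα]; nlinarith
  have hr : 0 ≤ 1 - θ := sub_nonneg.2 hθ1
  have hs1 := hA.sum_minimizer_sq_le h0 h1 hρ v hs
  let z : ℕ → Fin n → ℝ := fun k => match k with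
    | 0 => 0
    | k + 1 => fun i => x k i + (x (k + 1) i - x k i) / θ
  have hyz : ∀ k i, (1 + θ) * y k i = x k i + θ * z k i := by
    intro k i
    cases k with
    | zero => simp [hx0, hy0, z]
    | succ k =>
      rw [hy k, hβ]
      simp only [z]
      field_simp
      ring
  have hV : ∀ k, Freg A α v ρ (x k) - Freg A α v ρ s + α / 2 * ∑ i, (z k i - s i) ^ 2
      ≤ (1 - θ) ^ k * α := by
    intro k
    induction k with
    | zero =>
      have := hA.neg_half_le_Freg h0 h1 hρ v s
      rw [hx0, IsGraph.Freg_zero]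
      simp only [z, Pi.zero_apply, zero_sub, neg_sq, pow_zero, one_mul]
      nlinarith
    | succ k ih =>
      refine (hA.lyapunov_step hθ hθ1 hα hρ v (hx k) (hyz k)).trans ?_
      rw [pow_succ', mul_assoc]
      exact mul_le_mul_of_nonneg_left ih hr
  have hE : ∀ k, ∑ i, (x k i - s i) ^ 2 ≤ 2 * (1 - θ) ^ k := by
    intro k
    have hc := hA.strong_convexity_at_minimizer h0 h1 hρ v hs (x k)
    have hz : 0 ≤ α / 2 * ∑ i, (z k i - s i) ^ 2 :=
      mul_nonneg (by positivity) (Finset.sum_nonneg fun i _ => sq_nonneg _)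
    have := hV k
    refine le_of_mul_le_mul_left ?_ (half_pos h0)
    linarith
  cases k with
  | zero =>
    have := hE 0
    rw [hx0] at this
    rw [hy0]
    linarith
  | succ k =>
    have hβ0 : 0 ≤ β := by rw [hβ]; positivity
    have hβ1 : β ≤ 1 - θ := by
      rw [hβ, div_le_iff₀ (by positivity)]
      nlinarith
    have hterm : ∀ i, (y (k + 1) i - s i) ^ 2
        ≤ 8 * (x (k + 1) i - s i) ^ 2 + 2 * (1 - θ) * (x k i - s i) ^ 2 := by
      intro i
      rw [hy k]
      have e : x (k + 1) i + β * (x (k + 1) i - x k i) - s i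
          = (1 + β) * (x (k + 1) i - s i) - β * (x k i - s i) := by ring
      simp only [e]
      have b1 : (1 + β) ^ 2 ≤ 4 := by nlinarith
      have b2 : β ^ 2 ≤ 1 - θ := by nlinarith
      have c1 := mul_le_mul_of_nonneg_right b1 (sq_nonneg (x (k + 1) i - s i))
      have c2 := mul_le_mul_of_nonneg_right b2 (sq_nonneg (x k i - s i))
      nlinarith [sq_nonneg ((1 + β) * (x (k + 1) i - s i) + β * (x k i - s i))]
    have hsum := Finset.sum_le_sum fun i (_ : i ∈ Finset.univ) => hterm i
    rw [Finset.sum_add_distrib, ← Finset.mul_sum, ← Finset.mul_sum] at hsum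
    have e1 := hE (k + 1)
    have e2 := mul_le_mul_of_nonneg_left (hE k) hr
    have e3 : 0 ≤ (1 - θ) ^ (k + 1) := pow_nonneg hr _
    have e4 : (1 - θ) * (2 * (1 - θ) ^ k) = 2 * (1 - θ) ^ (k + 1) := by ring
    linarith

/-- If `S` lies in `B` and each of its vertices carries displacement at least `c √d`, the
volume of `S` is controlled by the total displacement and the volume of `B`. -/
lemma volS_le_of_displacement {n : ℕ} {A : Matrix (Fin n) (Fin n) ℝ} (hA : IsGraph A)
    {S B : Set (Fin n)} (hSB : S ⊆ B) {c R : ℝ} (hc : 0 < c) (hR : 0 ≤ R) (Δ : Fin n → ℝ)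
    (hΔ : ∀ i ∈ S, c * Real.sqrt (deg A i) ≤ |Δ i|) (hsum : ∑ i, (Δ i) ^ 2 ≤ R ^ 2) :
    volS A S ≤ Real.sqrt (volS A B) * R / c := by
  classical
  have hS0 : 0 ≤ volS A S := Finset.sum_nonneg fun i _ => (hA.deg_pos i).le
  have hmono : volS A S ≤ volS A B := by
    refine Finset.sum_le_sum_of_subset_of_nonneg (fun i hi => ?_) fun i _ _ => (hA.deg_pos i).le
    simp only [Finset.mem_filter, Finset.mem_univ, true_and] at hi ⊢
    exact hSB hi
  have h1 : c ^ 2 * volS A S ≤ R ^ 2 := by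
    refine le_trans ?_ hsum
    rw [volS, Finset.mul_sum]
    refine (Finset.sum_le_sum fun i hi => ?_).trans
      (Finset.sum_le_sum_of_subset_of_nonneg (Finset.subset_univ _) fun i _ _ => sq_nonneg (Δ i))
    simp only [Finset.mem_filter, Finset.mem_univ, true_and] at hi
    have := pow_le_pow_left₀ (by positivity) (hΔ i hi) 2
    rwa [mul_pow, Real.sq_sqrt (hA.deg_pos i).le, sq_abs] at this
  have h2 : c * Real.sqrt (volS A S) ≤ R := by
    refine le_of_sq_le_sq ?_ hR
    rwa [mul_pow, Real.sq_sqrt hS0]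
  rw [le_div_iff₀ hc]
  calc volS A S * c = Real.sqrt (volS A S) * (c * Real.sqrt (volS A S)) := by
        rw [mul_left_comm, Real.mul_self_sqrt hS0, mul_comm]
    _ ≤ Real.sqrt (volS A B) * R := by gcongr

/-- Total spurious work bound: run FISTA (η = 1, β = (1−√α)/(1+√α),
x₋₁ = x₀ = 0) on `F_{2ρ} = f + g_B`. If the spurious active sets
`Ã_k = supp(x_{k+1}) ∩ S_Aᶜ` satisfy `Ã_k ⊆ 𝓑` for all `k`, then there is an absolute
constant `C > 0` such that `∑_{k=0}^∞ vol(Ã_k) ≤ C·√(vol 𝓑)/(ρ·α^{3/2})`. -/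
theorem fista_spurious_work_bound :
    ∃ C : ℝ, 0 < C ∧
      ∀ (n : ℕ) (A : Matrix (Fin n) (Fin n) ℝ) (α ρ : ℝ) (v : Fin n)
        (xA xB : Fin n → ℝ) (x y : ℕ → Fin n → ℝ) (β : ℝ) (B : Set (Fin n)),
        IsGraph A → 0 < α → α ≤ 1 → 0 < ρ →
        -- xA is the minimizer of problem (A) `F_ρ`, xB of problem (B) `F_{2ρ}`
        (∀ z, Freg A α v ρ xA ≤ Freg A α v ρ z) →
        (∀ z, Freg A α v (2 * ρ) xB ≤ Freg A α v (2 * ρ) z) →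
        -- FISTA iterates on problem (B), x₋₁ = x₀ = 0 (hence y₀ = 0)
        β = (1 - Real.sqrt α) / (1 + Real.sqrt α) →
        x 0 = 0 → y 0 = 0 →
        (∀ k, x (k + 1) = softT A (2 * α * ρ) (fun i => y k i - gradf A α v (y k) i)) →
        (∀ k, y (k + 1) = fun i => x (k + 1) i + β * (x (k + 1) i - x k i)) →
        -- confinement: Ã_k = supp(x_{k+1}) ∩ S_Aᶜ ⊆ 𝓑 for all k
        (∀ k : ℕ, Function.support (x (k + 1)) ∩ (Function.support xA)ᶜ ⊆ B) →
        ∑' k : ℕ, volS A (Function.support (x (k + 1)) ∩ (Function.support xA)ᶜ) ≤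
          C * Real.sqrt (volS A B) / (ρ * α * Real.sqrt α) := by
  refine ⟨10, by norm_num, ?_⟩
  intro n A α ρ v xA xB x y β B hA h0 h1 hρ hxA hxB hβ hx0 hy0 hx hy hB
  have hθ : 0 < Real.sqrt α := Real.sqrt_pos.2 h0
  have hθ1 : Real.sqrt α ≤ 1 := Real.sqrt_le_one.2 h1
  have hα : α = Real.sqrt α ^ 2 := (Real.sq_sqrt h0.le).symm
  set θ := Real.sqrt α
  have hr0 : 0 ≤ 1 - θ := sub_nonneg.2 hθ1
  set r := Real.sqrt (1 - θ)
  have hr2 : r ^ 2 = 1 - θ := Real.sq_sqrt hr0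
  have hrn : 0 ≤ r := Real.sqrt_nonneg _
  have hrle : r ≤ 1 - θ / 2 := by nlinarith [sq_nonneg (r - 1)]
  have hcomm : 2 * α * ρ = α * (2 * ρ) := by ring
  have hx' : ∀ k, x (k + 1) = softT A (α * (2 * ρ)) (fun i => y k i - gradf A α v (y k) i) :=
    fun k => by rw [hx k, hcomm]
  have hdist := fista_dist_sq_le hA hθ hθ1 hα (by positivity : 0 < 2 * ρ) v hxB hβ hx0 hy0 hx' hy
  have hstep : ∀ k, volS A (Function.support (x (k + 1)) ∩ (Function.support xA)ᶜ)
      ≤ Real.sqrt (volS A B) * (5 * r ^ k) / (α * ρ) := by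
    intro k
    refine volS_le_of_displacement hA (hB k) (by positivity) (by positivity)
      (fun i => (y k - xB) i - (Qmat A α).mulVec (y k - xB) i) (fun i hi => ?_) ?_
    · obtain ⟨hi1, hi2⟩ := hi
      have hiA : xA i = 0 := by simpa using hi2
      obtain ⟨hb, hg⟩ := hA.abs_gradf_le_of_eq_zero h0 h1 hρ (by linarith) v hxA hxB hiA
      have hw : 2 * α * ρ * Real.sqrt (deg A i) < |y k i - gradf A α v (y k) i| := by
        by_contra hcon
        refine hi1 ?_
        rw [hx k]
        exact softThreshold_eq_zero (not_lt.1 hcon)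
      have e : (y k - xB) i - (Qmat A α).mulVec (y k - xB) i
          = (y k i - gradf A α v (y k) i) - (-gradf A α v xB i) := by
        rw [← IsGraph.gradf_sub A α v, Pi.sub_apply, hb]
        ring
      rw [e]
      have := abs_sub_abs_le_abs_sub (y k i - gradf A α v (y k) i) (-gradf A α v xB i)
      rw [abs_neg] at this
      linarith
    · refine (hA.sum_sub_Qmat_mulVec_sq_le h0 h1 _).trans ((hdist k).trans (le_of_eq ?_))
      rw [mul_pow, ← pow_mul, mul_comm k 2, pow_mul, hr2]
      norm_num
  have hgeom : ∀ N, ∑ k ∈ Finset.range N, r ^ k ≤ 2 / θ := by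
    intro N
    have hm := geom_sum_mul_neg r N
    have hG : 0 ≤ ∑ k ∈ Finset.range N, r ^ k := Finset.sum_nonneg fun k _ => pow_nonneg hrn k
    have hN := pow_nonneg hrn N
    rw [le_div_iff₀ hθ]
    nlinarith
  refine Real.tsum_le_of_sum_range_le
    (fun k => Finset.sum_nonneg fun i _ => (hA.deg_pos i).le) fun N => ?_
  calc ∑ k ∈ Finset.range N, volS A (Function.support (x (k + 1)) ∩ (Function.support xA)ᶜ)
      ≤ ∑ k ∈ Finset.range N, Real.sqrt (volS A B) * (5 * r ^ k) / (α * ρ) :=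
        Finset.sum_le_sum fun k _ => hstep k
    _ = Real.sqrt (volS A B) * 5 / (α * ρ) * ∑ k ∈ Finset.range N, r ^ k := by
        rw [Finset.mul_sum]
        exact Finset.sum_congr rfl fun k _ => by ring
    _ ≤ Real.sqrt (volS A B) * 5 / (α * ρ) * (2 / θ) := by
        gcongr
        exact hgeom N
    _ = 10 * Real.sqrt (volS A B) / (ρ * α * θ) := by
        field_simp
        ring
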